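/- The Fourier transform of x ↦ exp(⟨x,h⟩_{i}) exp(−t Q(x)) P(x) on R^{2d} (with Q positive definite, t > 0, P polynomial, ⟨·,·⟩ the imaginary pairing) equals p ↦ t^{−d} π^{d} Disc(Q)^{−1/2} exp(−(π²/t) Q^∨(p+h)) P̂(p), where P̂ is a polynomial of the same degree as P; in particular for P = 1, the Gaussian e^{−tQ(x)} transforms to t^{−d}π^{d}Disc(Q)^{−1/2} e^{−(π²/t)Q^∨(p)}. -/

import Mathlib

open Real Matrix MeasureTheory

noncomputable section

/-- The positive definite quadratic form `Q(x) = xᵀMx` on `ℝ^{2d}`. -/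
def Qform (n : ℕ) (M : Matrix (Fin n) (Fin n) ℝ) (x : Fin n → ℝ) : ℝ :=
  x ⬝ᵥ M.mulVec x

/-- The dual quadratic form `Q^∨(y) = yᵀM⁻¹y / (4π²)` with respect to the
purely imaginary pairing used in the Fourier transform. -/
def Qdual (n : ℕ) (M : Matrix (Fin n) (Fin n) ℝ) (y : Fin n → ℝ) : ℝ :=
  (1 / (4 * π ^ 2)) * (y ⬝ᵥ M⁻¹.mulVec y)

end

/-!
Choose a real matrix `A` with `Aᵀ M A = 1`. The substitution `x = A y` turns `t Q` into
`t ∑ yᵢ²`, contributes the Jacobian `|det A| = (det M) ^ (-1/2)`, and replaces `P` by its pullback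
along `A`, so the integral becomes a sum of products of one-dimensional integrals of
`yⁿ exp (-t y² + c y)`, where `c` is a coordinate of `i Aᵀ (p + h)`.

Integration by parts gives a two-term recursion for these integrals, whose solution is the
Gaussian integral times a polynomial in `c` of degree `n` with leading coefficient `(1 / (2 t))ⁿ`.
Since these leading coefficients do not vanish, replacing each monomial by the corresponding
product of moment polynomials is triangular for the degree and preserves total degree; so do the
invertible affine substitutions `x = A y` and `c = i Aᵀ (p + h)`.
-/

section Integration

variable {ι : Type*} [Fintype ι] [DecidableEq ι]

lemma abs_det_smul_integral_comp_mulVec {E : Type*} [NormedAddCommGroup E] [NormedSpace ℝ E]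
    {A : Matrix ι ι ℝ} (hA : A.det ≠ 0) (f : (ι → ℝ) → E) :
    |A.det| • ∫ y, f (A *ᵥ y) = ∫ x, f x := by
  have hemb : MeasurableEmbedding (toLin' A) := by
    refine Continuous.measurableEmbedding (LinearMap.continuous_of_finiteDimensional _) ?_
    exact mulVec_injective_iff_isUnit.2 ((isUnit_iff_isUnit_det A).2 hA.isUnit)
  have hmap := hemb.integral_map (μ := volume) f
  rw [Real.map_matrix_volume_pi_eq_smul_volume_pi hA, integral_smul_measure,
    ENNReal.toReal_ofReal (abs_nonneg _), abs_inv,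
    inv_smul_eq_iff₀ (abs_ne_zero.2 hA)] at hmap
  exact hmap.symm

end Integration

section Congruence

variable {ι : Type*} [Fintype ι] [DecidableEq ι]

lemma exists_transpose_mul_mul_eq_one {M : Matrix ι ι ℝ} (hM : M.PosDef) :
    ∃ A : Matrix ι ι ℝ, Aᵀ * M * A = 1 := by
  open scoped MatrixOrder Matrix.Norms.L2Operator in
  obtain ⟨B, hB, rfl⟩ :=
    CStarAlgebra.isStrictlyPositive_iff_eq_star_mul_self.mp hM.isStrictlyPositive
  have hdet : IsUnit B.det := (isUnit_iff_isUnit_det B).1 hB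
  refine ⟨B⁻¹, ?_⟩
  rw [star_eq_conjTranspose, conjTranspose_eq_transpose_of_trivial, ← Matrix.mul_assoc,
    ← transpose_mul, mul_nonsing_inv B hdet, transpose_one, Matrix.one_mul,
    mul_nonsing_inv B hdet]

section CommRing

variable {R : Type*} [CommRing R] {A M : Matrix ι ι R}

lemma mul_transpose_eq_inv (hA : Aᵀ * M * A = 1) : A * Aᵀ = M⁻¹ := by
  have hMAA : M * A * Aᵀ = 1 := mul_eq_one_comm.1 (by rw [← Matrix.mul_assoc, hA])
  rw [Matrix.mul_assoc] at hMAA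
  exact (inv_eq_right_inv hMAA).symm

lemma mulVec_dotProduct_mulVec_mulVec (hA : Aᵀ * M * A = 1) (y : ι → R) :
    (A *ᵥ y) ⬝ᵥ M *ᵥ (A *ᵥ y) = y ⬝ᵥ y := by
  calc (A *ᵥ y) ⬝ᵥ M *ᵥ (A *ᵥ y) = y ⬝ᵥ (Aᵀ * M * A) *ᵥ y := by
        rw [← mulVec_mulVec, ← mulVec_mulVec, dotProduct_mulVec y, vecMul_transpose]
    _ = y ⬝ᵥ y := by rw [hA, one_mulVec]

lemma sq_det_mul_det (hA : Aᵀ * M * A = 1) : A.det ^ 2 * M.det = 1 := by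
  have hdet := congrArg det hA
  rw [det_mul, det_mul, det_transpose, det_one] at hdet
  linear_combination hdet

lemma isUnit_det_of_transpose_mul_mul (hA : Aᵀ * M * A = 1) : IsUnit A.det :=
  (isUnit_iff_isUnit_det A).1 (isUnit_iff_exists_inv'.2 ⟨Aᵀ * M, hA⟩)

end CommRing

lemma abs_det_eq_cpow {A M : Matrix ι ι ℝ} (hA : Aᵀ * M * A = 1) :
    ((|A.det| : ℝ) : ℂ) = (M.det : ℂ) ^ (-(1 / 2 : ℂ)) := by
  have hM : M.det = (|A.det| ^ 2)⁻¹ := by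
    rw [sq_abs]
    exact eq_inv_of_mul_eq_one_right (sq_det_mul_det hA)
  have hreal : |A.det| = M.det ^ (-(1 / 2 : ℝ)) := by
    rw [hM, Real.inv_rpow (by positivity), Real.rpow_neg (by positivity), inv_inv,
      ← Real.sqrt_eq_rpow, Real.sqrt_sq (abs_nonneg _)]
  rw [hreal, Complex.ofReal_cpow (by rw [hM]; positivity)]
  push_cast
  rfl

end Congruence

section AffineSubstitution

open MvPolynomial

variable {ι κ R : Type*}

lemma totalDegree_bind₁_le [CommSemiring R] {f : ι → MvPolynomial κ R} {k : ℕ}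
    (hf : ∀ i, (f i).totalDegree ≤ k) (P : MvPolynomial ι R) :
    (bind₁ f P).totalDegree ≤ P.totalDegree * k := by
  rw [bind₁, aeval_def, eval₂_eq]
  refine totalDegree_finsetSum_le fun m hm => ?_
  calc (algebraMap R (MvPolynomial κ R) (P.coeff m) * ∏ i ∈ m.support, f i ^ m i).totalDegree
      ≤ ∑ i ∈ m.support, (f i ^ m i).totalDegree := by
        refine (totalDegree_mul _ _).trans ?_
        rw [algebraMap_eq, totalDegree_C, zero_add]
        exact totalDegree_finsetProd _ _
    _ ≤ ∑ i ∈ m.support, m i * k := Finset.sum_le_sum fun i _ =>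
        (totalDegree_pow _ _).trans (Nat.mul_le_mul_left _ (hf i))
    _ ≤ P.totalDegree * k := by
        rw [← Finset.sum_mul]
        exact Nat.mul_le_mul_right _ (le_totalDegree hm)

variable [Fintype κ]

/-- The pullback `x ↦ P (A x + b)` of a polynomial along an affine map. -/
noncomputable def affineSubst [CommSemiring R] (A : Matrix ι κ R) (b : ι → R) :
    MvPolynomial ι R →ₐ[R] MvPolynomial κ R :=
  bind₁ fun i => A.toMvPolynomial i + C (b i)

lemma eval_affineSubst [CommSemiring R] (A : Matrix ι κ R) (b : ι → R) (P : MvPolynomial ι R)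
    (x : κ → R) : eval x (affineSubst A b P) = eval (A *ᵥ x + b) P := by
  rw [affineSubst, ← aeval_eq_eval, aeval_bind₁]
  simp only [aeval_eq_eval, map_add, toMvPolynomial_eval_eq_apply, eval_C]
  rfl

lemma totalDegree_affineSubst_le [CommSemiring R] (A : Matrix ι κ R) (b : ι → R)
    (P : MvPolynomial ι R) : (affineSubst A b P).totalDegree ≤ P.totalDegree := by
  refine (totalDegree_bind₁_le (k := 1) (fun i => ?_) P).trans_eq (mul_one _)
  exact (totalDegree_add _ _).trans (max_le (A.toMvPolynomial_totalDegree_le i) (by simp))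

lemma affineSubst_affineSubst {μ : Type*} [Fintype μ] [CommSemiring R] (A : Matrix ι κ R)
    (b : ι → R) (B : Matrix κ μ R) (c : κ → R) (P : MvPolynomial ι R) :
    affineSubst B c (affineSubst A b P) = affineSubst (A * B) (A *ᵥ c + b) P := by
  have hlinear : ∀ i, bind₁ (fun j => B.toMvPolynomial j + C (c j)) (A.toMvPolynomial i) =
      (A * B).toMvPolynomial i + C ((A *ᵥ c) i) := by
    intro i
    rw [toMvPolynomial_mul]
    simp only [Matrix.toMvPolynomial, ← C_mul_X_eq_monomial, map_sum, map_mul, bind₁_C_right,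
      bind₁_X_right, mul_add, Finset.sum_add_distrib, mulVec, dotProduct]
  simp only [affineSubst, bind₁_bind₁, map_add, bind₁_C_right, hlinear, Pi.add_apply, add_assoc]

lemma affineSubst_one_zero [DecidableEq κ] [CommSemiring R] (P : MvPolynomial κ R) :
    affineSubst (1 : Matrix κ κ R) 0 P = P := by
  simp [affineSubst]

lemma totalDegree_affineSubst [Finite ι] [DecidableEq ι] [CommRing R] {A : Matrix ι κ R}
    {B : Matrix κ ι R} (hAB : A * B = 1) (b : ι → R) (P : MvPolynomial ι R) :
    (affineSubst A b P).totalDegree = P.totalDegree := by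
  cases nonempty_fintype ι
  have hinverse : affineSubst B (-(B *ᵥ b)) (affineSubst A b P) = P := by
    rw [affineSubst_affineSubst, hAB, mulVec_neg, mulVec_mulVec, hAB, one_mulVec,
      neg_add_cancel, affineSubst_one_zero]
  refine (totalDegree_affineSubst_le A b P).antisymm ?_
  conv_lhs => rw [← hinverse]
  exact totalDegree_affineSubst_le _ _ _

end AffineSubstitution

section MonomialSubstitution

open MvPolynomial

variable {ι R : Type*} [Fintype ι] [CommSemiring R]

/-- The linear substitution replacing each monomial `∏ i, X i ^ m i` by `∏ i, H (m i) (X i)`,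
for a sequence `H` of univariate polynomials. -/
noncomputable def monomialSubst (H : ℕ → Polynomial R) (P : MvPolynomial ι R) :
    MvPolynomial ι R :=
  ∑ m ∈ P.support, C (P.coeff m) * ∏ i, (H (m i)).toMvPolynomial i

lemma eval_monomialSubst (H : ℕ → Polynomial R) (P : MvPolynomial ι R) (x : ι → R) :
    eval x (monomialSubst H P) = ∑ m ∈ P.support, P.coeff m * ∏ i, (H (m i)).eval (x i) := by
  simp [monomialSubst, eval_toMvPolynomial]

lemma coeff_prod_toMvPolynomial (f : ι → Polynomial R) (m : ι →₀ ℕ) :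
    (∏ i, (f i).toMvPolynomial i).coeff m = ∏ i, (f i).coeff (m i) := by
  classical
  have hexpand : ∀ i, (f i).toMvPolynomial i =
      ∑ k ∈ Finset.range ((f i).natDegree + m i + 1), C ((f i).coeff k) * X i ^ k := by
    intro i
    rw [Polynomial.toMvPolynomial,
      Polynomial.aeval_eq_sum_range' (n := (f i).natDegree + m i + 1) (by lia)]
    simp only [smul_eq_C_mul]
  have hmonomial : ∀ k : ι → ℕ, ∏ i, C ((f i).coeff (k i)) * X i ^ k i =
      monomial (Finsupp.equivFunOnFinite.symm k) (∏ i, (f i).coeff (k i)) := by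
    intro k
    rw [Finset.prod_mul_distrib, monomial_eq, map_prod, Finsupp.prod_fintype _ _ (by simp)]
    simp only [Finsupp.equivFunOnFinite_symm_apply_apply]
  simp_rw [hexpand, Finset.prod_univ_sum, coeff_sum, hmonomial, coeff_monomial]
  rw [Finset.sum_eq_single (m : ι → ℕ)]
  · simp
  · rintro k - hk
    exact if_neg fun h => hk (by simp [← h])
  · intro hm
    exact absurd (Fintype.mem_piFinset.2 fun i => Finset.mem_range.2 (by lia)) hm

lemma coeff_monomialSubst (H : ℕ → Polynomial R) (P : MvPolynomial ι R) (m : ι →₀ ℕ) :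
    (monomialSubst H P).coeff m =
      ∑ k ∈ P.support, P.coeff k * ∏ i, (H (k i)).coeff (m i) := by
  simp only [monomialSubst, coeff_sum, coeff_C_mul, coeff_prod_toMvPolynomial]

variable {H : ℕ → Polynomial R}

lemma le_of_prod_coeff_ne_zero (hH : ∀ n, (H n).natDegree ≤ n) {m k : ι →₀ ℕ}
    (h : ∏ i, (H (k i)).coeff (m i) ≠ 0) : m ≤ k := by
  intro i
  by_contra! hlt
  exact h (Finset.prod_eq_zero (Finset.mem_univ i)
    (Polynomial.coeff_eq_zero_of_natDegree_lt ((hH _).trans_lt hlt)))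

lemma totalDegree_monomialSubst_le (hH : ∀ n, (H n).natDegree ≤ n) (P : MvPolynomial ι R) :
    (monomialSubst H P).totalDegree ≤ P.totalDegree := by
  refine Finset.sup_le fun m hm => ?_
  rw [mem_support_iff, coeff_monomialSubst] at hm
  obtain ⟨k, hk, hne⟩ := Finset.exists_ne_zero_of_sum_ne_zero hm
  exact (Finsupp.degree_mono (le_of_prod_coeff_ne_zero hH (right_ne_zero_of_mul hne))).trans
    (le_totalDegree hk)

lemma coeff_monomialSubst_of_totalDegree_le (hH : ∀ n, (H n).natDegree ≤ n)
    {P : MvPolynomial ι R} {m : ι →₀ ℕ} (hm : P.totalDegree ≤ m.degree) :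
    (monomialSubst H P).coeff m = P.coeff m * ∏ i, (H (m i)).coeff (m i) := by
  rw [coeff_monomialSubst]
  refine Finset.sum_eq_single m (fun k hk hkm => ?_) (fun hm => ?_)
  · by_contra hne
    obtain ⟨l, rfl⟩ := le_iff_exists_add.1
      (le_of_prod_coeff_ne_zero hH (right_ne_zero_of_mul hne))
    have hdeg : (m + l).degree ≤ m.degree := (le_totalDegree hk).trans hm
    rw [map_add, add_le_iff_nonpos_right, nonpos_iff_eq_zero, Finsupp.degree_eq_zero_iff] at hdeg
    exact hkm (by rw [hdeg, add_zero])
  · rw [notMem_support_iff.1 hm, zero_mul]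

lemma totalDegree_monomialSubst [NoZeroDivisors R] (hH : ∀ n, (H n).natDegree ≤ n)
    (hlead : ∀ n, (H n).coeff n ≠ 0) (P : MvPolynomial ι R) :
    (monomialSubst H P).totalDegree = P.totalDegree := by
  have : Nontrivial R := nontrivial_of_ne _ _ (hlead 0)
  refine (totalDegree_monomialSubst_le hH P).antisymm ?_
  obtain rfl | hP := eq_or_ne P 0
  · simp
  obtain ⟨m, hm, hmdeg⟩ : ∃ m ∈ P.support, P.totalDegree = m.degree :=
    Finset.exists_mem_eq_sup _ (support_nonempty.2 hP) _
  rw [hmdeg]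
  refine le_totalDegree (mem_support_iff.2 ?_)
  rw [coeff_monomialSubst_of_totalDegree_le hH hmdeg.le]
  exact mul_ne_zero (mem_support_iff.1 hm) (Finset.prod_ne_zero_iff.2 fun i _ => hlead _)

end MonomialSubstitution

section GaussianMoments

open Polynomial

/-- The `n`-th moment, as a polynomial in `X`, of a Gaussian variable with mean `s X` and
variance `s`. -/
noncomputable def gaussianMomentPoly {R : Type*} [CommSemiring R] (s : R) : ℕ → R[X]
  | 0 => 1
  | 1 => C s * X
  | n + 2 => C s * (X * gaussianMomentPoly s (n + 1) + C (n + 1 : R) * gaussianMomentPoly s n)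

lemma natDegree_gaussianMomentPoly_le {R : Type*} [CommSemiring R] (s : R) (n : ℕ) :
    (gaussianMomentPoly s n).natDegree ≤ n := by
  induction n using Nat.twoStepInduction with
  | zero => simp [gaussianMomentPoly]
  | one => exact (natDegree_C_mul_le _ _).trans natDegree_X_le
  | more n ih ih' =>
    rw [gaussianMomentPoly]
    refine (natDegree_C_mul_le _ _).trans (natDegree_add_le_of_degree_le ?_ ?_)
    · exact (natDegree_mul_le_of_le natDegree_X_le ih').trans (by lia)
    · exact (natDegree_C_mul_le _ _).trans (ih.trans (by lia))

lemma coeff_gaussianMomentPoly_self {R : Type*} [CommSemiring R] (s : R) (n : ℕ) :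
    (gaussianMomentPoly s n).coeff n = s ^ n := by
  induction n using Nat.twoStepInduction with
  | zero => simp [gaussianMomentPoly]
  | one => simp [gaussianMomentPoly]
  | more n _ ih' =>
    have hlow : (gaussianMomentPoly s n).coeff (n + 2) = 0 := coeff_eq_zero_of_natDegree_lt
      ((natDegree_gaussianMomentPoly_le s n).trans_lt (by lia))
    rw [gaussianMomentPoly, coeff_C_mul, coeff_add, coeff_X_mul, ih', coeff_C_mul, hlow,
      mul_zero, add_zero, ← pow_succ']

variable {b : ℂ}

lemma abs_pow_le_factorial_mul_exp_add_exp (x : ℝ) (n : ℕ) :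
    |x| ^ n ≤ n.factorial * (Real.exp x + Real.exp (-x)) := by
  have h := Real.pow_div_factorial_le_exp |x| (abs_nonneg x) n
  rw [div_le_iff₀' (by positivity)] at h
  exact h.trans (by gcongr; exact Real.exp_abs_le x)

lemma integrable_pow_mul_cexp_quadratic (hb : 0 < b.re) (c : ℂ) (n : ℕ) :
    Integrable fun x : ℝ => (x : ℂ) ^ n * Complex.exp (-b * x ^ 2 + c * x) := by
  -- `|x| ^ n` is dominated by `exp x + exp (-x)`, a factor that only shifts `c` by `±1`.
  have hdom : Integrable fun x : ℝ => (n.factorial : ℝ) *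
      (‖Complex.exp (-b * x ^ 2 + (c + 1) * x + 0)‖ +
        ‖Complex.exp (-b * x ^ 2 + (c - 1) * x + 0)‖) :=
    ((integrable_cexp_quadratic hb _ _).norm.add
      (integrable_cexp_quadratic hb _ _).norm).const_mul _
  refine hdom.mono' (by fun_prop) (.of_forall fun x => ?_)
  have hshift : ∀ r : ℝ, ‖Complex.exp (-b * x ^ 2 + (c + r) * x + 0)‖ =
      Real.exp (r * x) * ‖Complex.exp (-b * x ^ 2 + c * x)‖ := by
    intro r
    rw [← Complex.norm_exp_ofReal, ← norm_mul, ← Complex.exp_add]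
    congr 2
    push_cast
    ring
  have h1 := hshift 1
  have h2 := hshift (-1)
  push_cast at h1 h2
  rw [sub_eq_add_neg, h1, h2, norm_mul, norm_pow, Complex.norm_real, Real.norm_eq_abs, ← add_mul,
    ← mul_assoc, one_mul, neg_one_mul]
  gcongr
  exact abs_pow_le_factorial_mul_exp_add_exp x n

lemma hasDerivAt_pow_mul_cexp_quadratic (b c : ℂ) (n : ℕ) (x : ℝ) :
    HasDerivAt (fun x : ℝ => (x : ℂ) ^ n * Complex.exp (-b * x ^ 2 + c * x))
      (n * ((x : ℂ) ^ (n - 1) * Complex.exp (-b * x ^ 2 + c * x)) +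
        c * ((x : ℂ) ^ n * Complex.exp (-b * x ^ 2 + c * x)) -
        2 * b * ((x : ℂ) ^ (n + 1) * Complex.exp (-b * x ^ 2 + c * x))) x := by
  have hid : HasDerivAt (fun x : ℝ => (x : ℂ)) 1 x := Complex.ofRealCLM.hasDerivAt
  have hexp := (((hid.pow 2).const_mul (-b)).add (hid.const_mul c)).cexp
  refine ((hid.pow n).mul hexp).congr_deriv ?_
  simp only [mul_one, Pi.pow_apply, Pi.add_apply, Nat.cast_ofNat, Nat.add_one_sub_one, pow_one]
  ring

lemma integral_pow_succ_mul_cexp_quadratic (hb : 0 < b.re) (c : ℂ) (n : ℕ) :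
    ∫ x : ℝ, (x : ℂ) ^ (n + 1) * Complex.exp (-b * x ^ 2 + c * x) =
      1 / (2 * b) * (c * (∫ x : ℝ, (x : ℂ) ^ n * Complex.exp (-b * x ^ 2 + c * x)) +
        n * ∫ x : ℝ, (x : ℂ) ^ (n - 1) * Complex.exp (-b * x ^ 2 + c * x)) := by
  have hb0 : b ≠ 0 := by rintro rfl; simp at hb
  have hint := integrable_pow_mul_cexp_quadratic hb c
  have hparts := integral_eq_zero_of_hasDerivAt_of_integrable
    (hasDerivAt_pow_mul_cexp_quadratic b c n)
    ((((hint (n - 1)).const_mul _).add ((hint n).const_mul _)).sub ((hint (n + 1)).const_mul _))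
    (hint n)
  rw [integral_sub (((hint (n - 1)).const_mul _).fun_add ((hint n).const_mul _))
      ((hint (n + 1)).const_mul _),
    integral_add ((hint (n - 1)).const_mul _) ((hint n).const_mul _)] at hparts
  simp only [integral_const_mul] at hparts
  rw [one_div, eq_inv_mul_iff_mul_eq₀ (by simpa using hb0)]
  linear_combination -hparts

lemma integral_pow_mul_cexp_quadratic (hb : 0 < b.re) (c : ℂ) (n : ℕ) :
    ∫ x : ℝ, (x : ℂ) ^ n * Complex.exp (-b * x ^ 2 + c * x) =
      (π / b) ^ (1 / 2 : ℂ) * Complex.exp (c ^ 2 / (4 * b)) *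
        (gaussianMomentPoly (1 / (2 * b)) n).eval c := by
  have hzero : ∫ x : ℝ, (x : ℂ) ^ 0 * Complex.exp (-b * x ^ 2 + c * x) =
      (π / b) ^ (1 / 2 : ℂ) * Complex.exp (c ^ 2 / (4 * b)) := by
    simpa [div_neg] using integral_cexp_quadratic (b := -b) (by simpa using hb) c 0
  induction n using Nat.twoStepInduction with
  | zero => simpa [gaussianMomentPoly] using hzero
  | one =>
    have hone := integral_pow_succ_mul_cexp_quadratic hb c 0
    rw [hzero, zero_add] at hone
    rw [hone]
    simp only [gaussianMomentPoly, Nat.cast_zero, zero_mul, eval_mul, eval_C, eval_X]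
    ring
  | more n ih ih' =>
    rw [integral_pow_succ_mul_cexp_quadratic hb, Nat.add_sub_cancel, ih, ih', gaussianMomentPoly]
    simp only [Nat.cast_add, Nat.cast_one, eval_mul, eval_add, eval_C, eval_X]
    ring

end GaussianMoments

section MultivariateGaussian

open MvPolynomial

variable {ι : Type*} [Fintype ι]

lemma integral_cexp_neg_mul_sum_add_mul_eval {b : ℂ} (hb : 0 < b.re) (c : ι → ℂ)
    (P : MvPolynomial ι ℂ) :
    ∫ x : ι → ℝ, Complex.exp (-b * ∑ i, (x i : ℂ) ^ 2 + ∑ i, c i * x i) *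
        eval (fun i => (x i : ℂ)) P =
      (π / b) ^ (Fintype.card ι / 2 : ℂ) * Complex.exp ((∑ i, c i ^ 2) / (4 * b)) *
        eval c (monomialSubst (gaussianMomentPoly (1 / (2 * b))) P) := by
  have hsplit : ∀ x : ι → ℝ, Complex.exp (-b * ∑ i, (x i : ℂ) ^ 2 + ∑ i, c i * x i) *
      eval (fun i => (x i : ℂ)) P =
      ∑ m ∈ P.support,
        P.coeff m * ∏ i, (x i : ℂ) ^ m i * Complex.exp (-b * x i ^ 2 + c i * x i) := by
    intro x
    rw [eval_eq', Finset.mul_sum, Finset.mul_sum, ← Finset.sum_add_distrib, Complex.exp_sum]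
    refine Finset.sum_congr rfl fun m _ => ?_
    rw [Finset.prod_mul_distrib]
    ring
  have hint : ∀ m ∈ P.support, Integrable fun x : ι → ℝ =>
      P.coeff m * ∏ i, (x i : ℂ) ^ m i * Complex.exp (-b * x i ^ 2 + c i * x i) := fun m _ =>
    (Integrable.fintype_prod fun i =>
      integrable_pow_mul_cexp_quadratic hb (c i) (m i)).const_mul _
  have hconst : ((π / b) ^ (1 / 2 : ℂ)) ^ Fintype.card ι =
      (π / b) ^ (Fintype.card ι / 2 : ℂ) := by
    rw [← Complex.cpow_nat_mul, mul_one_div]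
  simp_rw [hsplit]
  rw [integral_finsetSum _ hint, eval_monomialSubst, Finset.mul_sum]
  refine Finset.sum_congr rfl fun m _ => ?_
  rw [integral_const_mul, integral_fintype_prod_volume_eq_prod
    (f := fun i (x : ℝ) => (x : ℂ) ^ m i * Complex.exp (-b * x ^ 2 + c i * x))]
  simp_rw [integral_pow_mul_cexp_quadratic hb]
  rw [Finset.prod_mul_distrib, Finset.prod_mul_distrib, Finset.prod_const, Finset.card_univ,
    hconst, ← Complex.exp_sum, Finset.sum_div]
  ring

end MultivariateGaussian

section QuadraticGaussian

open MvPolynomial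

variable {ι : Type*} [Fintype ι] [DecidableEq ι] {A M : Matrix ι ι ℝ}

lemma cexp_pairing_mul_cexp_neg_mul_eval_comp_mulVec (hA : Aᵀ * M * A = 1) (t : ℂ)
    (P : MvPolynomial ι ℂ) (w : ι → ℂ) (y : ι → ℝ) :
    Complex.exp (Complex.I * ∑ i, (A *ᵥ y) i * w i) *
        Complex.exp (-(t * ((A *ᵥ y) ⬝ᵥ M *ᵥ (A *ᵥ y) : ℝ))) *
        eval (fun i => ((A *ᵥ y) i : ℂ)) P =
      Complex.exp (-t * ∑ i, (y i : ℂ) ^ 2 +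
          ∑ i, ((Complex.I • (A.map Complex.ofRealHom)ᵀ) *ᵥ w) i * y i) *
        eval (fun i => (y i : ℂ)) (affineSubst (A.map Complex.ofRealHom) 0 P) := by
  have hcoord : (fun i => ((A *ᵥ y) i : ℂ)) = A.map Complex.ofRealHom *ᵥ fun i => (y i : ℂ) :=
    funext (Complex.ofRealHom.map_mulVec A y)
  have hquad : (((A *ᵥ y) ⬝ᵥ M *ᵥ (A *ᵥ y) : ℝ) : ℂ) = ∑ i, (y i : ℂ) ^ 2 := by
    rw [mulVec_dotProduct_mulVec_mulVec hA]
    simp only [dotProduct, sq, Complex.ofReal_sum, Complex.ofReal_mul]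
  have hpair : Complex.I * ∑ i, ((A *ᵥ y) i : ℂ) * w i =
      ∑ i, ((Complex.I • (A.map Complex.ofRealHom)ᵀ) *ᵥ w) i * y i := by
    change Complex.I * ((fun i => ((A *ᵥ y) i : ℂ)) ⬝ᵥ w) =
      ((Complex.I • (A.map Complex.ofRealHom)ᵀ) *ᵥ w) ⬝ᵥ fun i => (y i : ℂ)
    rw [hcoord, smul_mulVec, smul_dotProduct, mulVec_transpose, ← dotProduct_mulVec,
      dotProduct_comm, smul_eq_mul]
  rw [eval_affineSubst, add_zero, hcoord, hquad, hpair, ← Complex.exp_add, neg_mul, add_comm]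

lemma integral_cexp_pairing_mul_cexp_neg_mul_eval (hA : Aᵀ * M * A = 1) {t : ℂ}
    (ht : 0 < t.re) (P : MvPolynomial ι ℂ) (w : ι → ℂ) :
    ∫ x : ι → ℝ, Complex.exp (Complex.I * ∑ i, x i * w i) *
        Complex.exp (-(t * (x ⬝ᵥ M *ᵥ x : ℝ))) * eval (fun i => (x i : ℂ)) P =
      (π / t) ^ (Fintype.card ι / 2 : ℂ) * (M.det : ℂ) ^ (-(1 / 2 : ℂ)) *
        Complex.exp (-(1 / (4 * t)) * (w ⬝ᵥ M⁻¹.map Complex.ofRealHom *ᵥ w)) *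
        eval ((Complex.I • (A.map Complex.ofRealHom)ᵀ) *ᵥ w)
          (monomialSubst (gaussianMomentPoly (1 / (2 * t)))
            (affineSubst (A.map Complex.ofRealHom) 0 P)) := by
  have hsq : ∑ i, ((Complex.I • (A.map Complex.ofRealHom)ᵀ) *ᵥ w) i ^ 2 =
      -(w ⬝ᵥ M⁻¹.map Complex.ofRealHom *ᵥ w) := by
    rw [← mul_transpose_eq_inv hA, Matrix.map_mul, transpose_map, ← mulVec_mulVec,
      dotProduct_mulVec w, ← mulVec_transpose]
    simp only [smul_mulVec, Pi.smul_apply, smul_eq_mul, mul_pow, Complex.I_sq, neg_one_mul,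
      Finset.sum_neg_distrib, dotProduct, ← sq]
  rw [← abs_det_smul_integral_comp_mulVec (isUnit_det_of_transpose_mul_mul hA).ne_zero]
  simp_rw [cexp_pairing_mul_cexp_neg_mul_eval_comp_mulVec hA]
  rw [integral_cexp_neg_mul_sum_add_mul_eval ht, hsq, Complex.real_smul, abs_det_eq_cpow hA]
  ring_nf

end QuadraticGaussian

lemma div_cpow_two_mul_div_two (a t : ℂ) (d : ℕ) :
    (a / t) ^ (((2 * d : ℕ) : ℂ) / 2) = t ^ (-(d : ℤ)) * a ^ d := by
  rw [Nat.cast_mul, Nat.cast_ofNat, mul_div_cancel_left₀ _ two_ne_zero, Complex.cpow_natCast,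
    div_pow, _root_.zpow_neg, zpow_natCast, div_eq_inv_mul]

lemma ofReal_mul_Qdual {n : ℕ} (M : Matrix (Fin n) (Fin n) ℝ) (t : ℝ) (y : Fin n → ℝ) :
    ((π ^ 2 / t * Qdual n M y : ℝ) : ℂ) = 1 / (4 * t) *
      ((fun i => (y i : ℂ)) ⬝ᵥ M⁻¹.map Complex.ofRealHom *ᵥ fun i => (y i : ℂ)) := by
  have hcast : ((y ⬝ᵥ M⁻¹ *ᵥ y : ℝ) : ℂ) =
      (fun i => (y i : ℂ)) ⬝ᵥ M⁻¹.map Complex.ofRealHom *ᵥ fun i => (y i : ℂ) := by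
    rw [← Complex.ofRealHom_eq_coe, RingHom.map_dotProduct]
    exact congrArg _ (funext (Complex.ofRealHom.map_mulVec _ _))
  rw [← hcast, Qdual]
  push_cast
  field_simp

theorem stmt16_general {ι : Type*} [Fintype ι] [DecidableEq ι] {M : Matrix ι ι ℝ}
    (hM : M.PosDef) {t : ℂ} (ht : 0 < t.re) (P : MvPolynomial ι ℂ) (h : ι → ℂ) :
    ∃ Ph : MvPolynomial ι ℂ, Ph.totalDegree = P.totalDegree ∧ ∀ p : ι → ℂ,
      ∫ x : ι → ℝ, Complex.exp (Complex.I * ∑ i, x i * (h i + p i)) *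
          Complex.exp (-(t * (x ⬝ᵥ M *ᵥ x : ℝ))) * MvPolynomial.eval (fun i => (x i : ℂ)) P =
        (π / t) ^ (Fintype.card ι / 2 : ℂ) * (M.det : ℂ) ^ (-(1 / 2 : ℂ)) *
          Complex.exp (-(1 / (4 * t)) *
            ((p + h) ⬝ᵥ M⁻¹.map Complex.ofRealHom *ᵥ (p + h))) *
          MvPolynomial.eval p Ph := by
  obtain ⟨A, hA⟩ := exists_transpose_mul_mul_eq_one hM
  set A' := A.map Complex.ofRealHom
  have hs : 1 / (2 * t) ≠ 0 := by
    have : t ≠ 0 := by rintro rfl; simp at ht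
    simpa
  have hdet : IsUnit A'.det := by
    change IsUnit (Complex.ofRealHom.mapMatrix A).det
    rw [← RingHom.map_det]
    exact (isUnit_det_of_transpose_mul_mul hA).map Complex.ofRealHom
  have hdetT : IsUnit (Complex.I • A'ᵀ).det := by
    rw [det_smul, det_transpose]
    exact (Complex.I_ne_zero.isUnit.pow _).mul hdet
  refine ⟨affineSubst (Complex.I • A'ᵀ) ((Complex.I • A'ᵀ) *ᵥ h)
    (monomialSubst (gaussianMomentPoly (1 / (2 * t))) (affineSubst A' 0 P)), ?_, fun p => ?_⟩
  · rw [totalDegree_affineSubst (mul_nonsing_inv _ hdetT),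
      totalDegree_monomialSubst (natDegree_gaussianMomentPoly_le _)
        (fun n => by rw [coeff_gaussianMomentPoly_self]; exact pow_ne_zero n hs),
      totalDegree_affineSubst (mul_nonsing_inv _ hdet)]
  · rw [eval_affineSubst, ← mulVec_add, ← integral_cexp_pairing_mul_cexp_neg_mul_eval hA ht]
    simp only [Pi.add_apply, add_comm]

/-- the Fourier transform of
`x ↦ e^{i⟨x,h⟩} e^{−tQ(x)} P(x)` on `ℝ^{2d}` equals
`p ↦ t^{−d} π^d Disc(Q)^{−1/2} exp(−(π²/t) Q^∨(p+h)) P̂(p)` with `P̂` a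
polynomial of the same degree as `P` (for `P = 1` this is the Gaussian
transformation formula). -/
theorem stmt16 (d : ℕ) (hd : 0 < d) (M : Matrix (Fin (2 * d)) (Fin (2 * d)) ℝ)
    (hM : M.PosDef) (t : ℝ) (ht : 0 < t) (P : MvPolynomial (Fin (2 * d)) ℂ)
    (h : Fin (2 * d) → ℝ) :
    ∃ Ph : MvPolynomial (Fin (2 * d)) ℂ, Ph.totalDegree = P.totalDegree ∧
      ∀ p : Fin (2 * d) → ℝ,
        (∫ x : Fin (2 * d) → ℝ,
          Complex.exp (Complex.I * ∑ i, (x i : ℂ) * ((h i : ℂ) + (p i : ℂ))) *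
            Complex.exp (-(t * Qform (2 * d) M x : ℝ) : ℂ) *
            MvPolynomial.eval (fun i => (x i : ℂ)) P) =
        (t : ℂ) ^ (-(d : ℤ)) * (π : ℂ) ^ d * (M.det : ℂ) ^ (-(1 / 2 : ℂ)) *
          Complex.exp (-((π ^ 2 / t) * Qdual (2 * d) M (fun i => p i + h i) : ℝ) : ℂ) *
          MvPolynomial.eval (fun i => (p i : ℂ)) Ph := by
  obtain ⟨Ph, hdeg, hPh⟩ := stmt16_general hM (t := t) (by simpa using ht) P fun i => (h i : ℂ)
  refine ⟨Ph, hdeg, fun p => ?_⟩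
  rw [← div_cpow_two_mul_div_two, ofReal_mul_Qdual]
  simpa [Qform, Pi.add_def] using hPh fun i => (p i : ℂ)
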